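/- arXiv:2604.09738 — 3 statements merged into one kernel-verified Lean document; each statement's English description precedes it below -/
import Mathlib

section
/- Let R be a regular local ring of Krull dimension 2, and let G be a nonzero finitely generated R-module that is torsion (i.e., G ⊗_R Frac(R) = 0) and has no nonzero submodule of finite length. Then there exist a natural number a and an injective R-linear map f : R^a → R^a whose cokernel is isomorphic to G; in particular G admits a free resolution 0 → R^a → R^a → G → 0 by free modules of the same finite rank. -/
/-- A (commutative, local) ring is a *regular local ring of Krull dimension 2* if it is
Noetherian, has Krull dimension 2, and its maximal ideal is generated by 2 elements. -/
def IsRegularLocalRingOfDimTwo (R : Type*) [CommRing R] [IsLocalRing R] : Prop :=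
  IsNoetherianRing R ∧ ringKrullDim R = 2 ∧
    ∃ x y : R, IsLocalRing.maximalIdeal R = Ideal.span {x, y}

namespace SqFree
section
open IsLocalRing
variable {A : Type*} [CommRing A] [IsLocalRing A] [IsNoetherianRing A]
theorem l1 (y : A) (h : maximalIdeal A = Ideal.span {y}) (a : A) (ha : a ≠ 0) :
    ∃ (n : ℕ) (u : A), IsUnit u ∧ a = u * y ^ n := by
  have hk := Ideal.iInf_pow_eq_bot_of_isLocalRing (maximalIdeal A) (Ideal.IsPrime.ne_top inferInstance)
  have hex : ∃ n, a ∉ maximalIdeal A ^ n := by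
    by_contra! hc
    apply ha
    have : a ∈ (⨅ i : ℕ, maximalIdeal A ^ i) := by simpa [Ideal.mem_iInf] using hc
    rwa [hk] at this
  classical
  obtain ⟨n, hn⟩ : ∃ n, a ∈ maximalIdeal A ^ n ∧ a ∉ maximalIdeal A ^ (n+1) := by
    by_contra! hc
    obtain ⟨n, hn⟩ := hex
    apply hn
    clear hn
    induction n with
    | zero => simp
    | succ n ih => exact hc n ih
  rw [h, Ideal.span_singleton_pow, Ideal.span_singleton_pow, Ideal.mem_span_singleton', Ideal.mem_span_singleton'] at hn
  obtain ⟨⟨u, rfl⟩, h2⟩ := hn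
  refine ⟨n, u, ?_, rfl⟩
  by_contra hu
  have : u ∈ maximalIdeal A := hu
  rw [h, Ideal.mem_span_singleton'] at this
  obtain ⟨v, rfl⟩ := this
  exact h2 ⟨v, by ring⟩

theorem l2 (y : A) (h : maximalIdeal A = Ideal.span {y}) (hd : 1 ≤ ringKrullDim A) : IsDomain A := by
  have hy : ∀ n, y ^ n ≠ 0 := by
    intro n hn
    have : Ring.KrullDimLE 0 A := by
      rw [Ring.krullDimLE_zero_iff]
      intro I hI
      have h1 : maximalIdeal A ≤ I := by
        rw [h, Ideal.span_le, Set.singleton_subset_iff]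
        exact hI.mem_of_pow_mem n (hn ▸ I.zero_mem)
      rw [← (maximalIdeal.isMaximal A).eq_of_le hI.ne_top h1]
      infer_instance
    have h0 := (Ring.krullDimLE_iff (n := 0) (R := A)).1 this
    have := hd.trans h0
    norm_num at this
  have : NoZeroDivisors A := ⟨by
    intro a b hab
    by_contra! hc
    obtain ⟨n, u, hu, rfl⟩ := l1 y h a hc.1
    obtain ⟨m, v, hv, rfl⟩ := l1 y h b hc.2
    apply hy (n+m)
    rw [← (hu.mul hv).mul_right_eq_zero, ← hab]; ring⟩
  exact NoZeroDivisors.to_isDomain A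

theorem maxQuot (x y : A) (h : maximalIdeal A = Ideal.span {x, y}) [IsLocalRing (A ⧸ Ideal.span {x})] :
    maximalIdeal (A ⧸ Ideal.span {x}) = Ideal.span {Ideal.Quotient.mk _ y} := by
  have hloc : IsLocalHom (Ideal.Quotient.mk (Ideal.span {x})) :=
    IsLocalHom.of_surjective _ Ideal.Quotient.mk_surjective
  have h1 := map_maximalIdeal_of_surjective (Ideal.Quotient.mk (Ideal.span {x})) Ideal.Quotient.mk_surjective
  rw [← h1, h, Ideal.map_span, Set.image_pair]
  have : Ideal.Quotient.mk (Ideal.span {x}) x = 0 := by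
    rw [Ideal.Quotient.eq_zero_iff_mem]; exact Ideal.mem_span_singleton_self x
  rw [this, Ideal.span_insert_zero]

theorem nontQuot (x y : A) (h : maximalIdeal A = Ideal.span {x, y}) :
    Nontrivial (A ⧸ Ideal.span {x}) := by
  apply Ideal.Quotient.nontrivial_iff.2
  intro ht
  have : (1 : A) ∈ maximalIdeal A := by
    rw [h]
    exact Ideal.span_mono (by simp) (ht ▸ Submodule.mem_top : (1:A) ∈ Ideal.span {x})
  exact this isUnit_one

theorem primeX (hd : ringKrullDim A = 2) (x y : A) (h : maximalIdeal A = Ideal.span {x, y}) :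
    (Ideal.span {x}).IsPrime := by
  have := nontQuot x y h
  have : IsLocalRing (A ⧸ Ideal.span {x}) := .of_surjective' _ Ideal.Quotient.mk_surjective
  rw [← Ideal.Quotient.isDomain_iff_prime]
  apply l2 _ (maxQuot x y h)
  have hx : x ∈ maximalIdeal A := by rw [h]; exact Ideal.subset_span (by simp)
  have h1 := ringKrullDim_le_ringKrullDim_quotSMulTop_succ hx
  rw [← Submodule.ideal_span_singleton_smul, smul_eq_mul, Ideal.mul_top, hd] at h1
  have : (1 : WithBot ℕ∞) + 1 ≤ ringKrullDim (A ⧸ Ideal.span {x}) + 1 := by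
    rw [one_add_one_eq_two]; exact h1
  exact ENat.WithBot.add_le_add_one_right_iff.1 this

theorem domR (hd : ringKrullDim A = 2) (x y : A) (h : maximalIdeal A = Ideal.span {x, y}) :
    IsDomain A := by
  have hm : maximalIdeal A ∉ minimalPrimes A := by
    intro hm
    have h1 := maximalIdeal_height_eq_ringKrullDim (R := A)
    have h2 := Ideal.height_le_one_of_isPrincipal_of_mem_minimalPrimes (⊥ : Ideal A) _ hm
    rw [hd] at h1
    have h3 : (maximalIdeal A).height = 2 := WithBot.coe_injective h1
    rw [h3] at h2
    norm_num at h2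
  have hgen : ∀ k : ℕ, maximalIdeal A = Ideal.span {x + y * y ^ k, y} := by
    intro k
    rw [h, mul_comm, Ideal.span_pair_add_mul_right]
  have hpr := fun k => primeX hd _ _ (hgen k)
  obtain ⟨k, hk⟩ : ∃ k, Ideal.span {x + y * y ^ k} ∉ minimalPrimes A := by
    by_contra! hc
    have hinj : ¬ Function.Injective (fun k : ℕ => (⟨_, hc k⟩ : minimalPrimes A)) := by
      have := (minimalPrimes.finite_of_isNoetherianRing A).to_subtype
      exact not_injective_infinite_finite _
    apply hinj
    have key : ∀ k l : ℕ, k < l → Ideal.span {x + y * y ^ k} = Ideal.span {x + y * y ^ l} → False := by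
      intro k l hkl he
      apply hm
      set P := Ideal.span {x + y * y ^ k} with hP
      have hPp : P.IsPrime := hpr k
      have m1 : x + y * y ^ k ∈ P := Ideal.mem_span_singleton_self _
      have m2 : x + y * y ^ l ∈ P := he ▸ Ideal.mem_span_singleton_self _
      obtain ⟨d, rfl⟩ := Nat.exists_eq_add_of_lt hkl
      have m3 : y ^ (k+1) * (1 - y ^ (d+1)) ∈ P := by
        convert P.sub_mem m1 m2 using 1; ring
      have hym : y ∈ maximalIdeal A := by rw [h]; exact Ideal.subset_span (by simp)
      have hyP : y ∈ P := by
        rcases hPp.mem_or_mem m3 with hcase | hcase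
        · exact hPp.mem_of_pow_mem _ hcase
        · exfalso
          apply hPp.ne_top
          apply Ideal.eq_top_of_isUnit_mem _ hcase
          by_contra hu
          have h4 : (1 - y ^ (d+1)) ∈ maximalIdeal A := hu
          have h5 := (maximalIdeal A).add_mem h4 (Ideal.pow_mem_of_mem _ hym (d+1) (by omega))
          rw [sub_add_cancel] at h5
          exact h5 isUnit_one
      have hxP : x ∈ P := by
        have := P.sub_mem m1 (P.mul_mem_right (y ^ k) hyP)
        rwa [add_sub_cancel_right] at this
      have : maximalIdeal A = P := by
        apply (maximalIdeal.isMaximal A).eq_of_le hPp.ne_top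
        rw [h, Ideal.span_le]
        rintro z (rfl | rfl) <;> assumption
      rw [this]; exact hc k
    intro k l hkl
    have hkl' : Ideal.span {x + y * y ^ k} = Ideal.span {x + y * y ^ l} := congrArg Subtype.val hkl
    rcases lt_trichotomy k l with hcase | hcase | hcase
    · exact (key _ _ hcase hkl').elim
    · exact hcase
    · exact (key _ _ hcase hkl'.symm).elim
  have := hpr k
  set z := x + y * y ^ k
  obtain ⟨q, hq, hqz⟩ := Ideal.exists_minimalPrimes_le (bot_le : ⊥ ≤ Ideal.span {z})
  have hqp : q.IsPrime := hq.1.1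
  have hz : z ∉ q := by
    intro hz
    apply hk
    rwa [le_antisymm ((Ideal.span_singleton_le_iff_mem _).2 hz) hqz]
  have hzm : z ∈ maximalIdeal A := by rw [hgen k]; exact Ideal.subset_span (by simp [z])
  have : q = ⊥ := by
    apply Submodule.eq_bot_of_le_smul_of_le_jacobson_bot (Ideal.span {z}) q (IsNoetherian.noetherian q)
    · intro r hr
      obtain ⟨s, rfl⟩ := Ideal.mem_span_singleton'.1 (hqz hr)
      have hs : s ∈ q := (hqp.mem_or_mem hr).resolve_right hz
      rw [mul_comm]
      exact Submodule.smul_mem_smul (Ideal.mem_span_singleton_self z) hs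
    · rw [jacobson_eq_maximalIdeal _ bot_ne_top]
      simpa using hzm
  subst this
  have : NoZeroDivisors A := ⟨fun {a b} hab => by
    simpa using hqp.mem_or_mem (show a * b ∈ (⊥ : Ideal A) by simpa using hab)⟩
  exact NoZeroDivisors.to_isDomain A

theorem x_ne (hd : ringKrullDim A = 2) (x y : A) (h : maximalIdeal A = Ideal.span {x, y}) :
    x ≠ 0 := by
  rintro rfl
  have h0 : maximalIdeal A = Ideal.span {y} := by rw [h, Ideal.span_insert_zero]
  have h1 := ringKrullDim_le_spanFinrank_maximalIdeal A
  have h2 := Submodule.spanFinrank_span_le_ncard_of_finite (R := A) (Set.finite_singleton y)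
  rw [Set.ncard_singleton] at h2
  rw [hd, h0] at h1
  have h3 : 2 ≤ (Submodule.span A {y}).spanFinrank := by exact_mod_cast h1
  omega

theorem y_nmem (hd : ringKrullDim A = 2) (x y : A) (h : maximalIdeal A = Ideal.span {x, y}) :
    y ∉ Ideal.span {x} := by
  intro hy
  obtain ⟨c, rfl⟩ := Ideal.mem_span_singleton'.1 hy
  have : maximalIdeal A = Ideal.span {0, x} := by
    rw [h, Ideal.span_insert_zero]
    apply le_antisymm
    · rw [Ideal.span_le]
      rintro z (rfl | rfl)
      · exact Ideal.mem_span_singleton_self _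
      · exact hy
    · exact Ideal.span_mono (by simp)
  exact x_ne hd _ _ this rfl

open Pointwise in
theorem freeK (hd : ringKrullDim A = 2) (x y : A) (h : maximalIdeal A = Ideal.span {x, y})
    {ι : Type*} [Finite ι] (K : Submodule A (ι → A))
    (hK : ∀ l, x • l ∈ K → y • l ∈ K → l ∈ K) : Module.Free A K := by
  have := domR hd x y h
  have hx0 := x_ne hd x y h
  have hxm : x ∈ maximalIdeal A := by rw [h]; exact Ideal.subset_span (by simp)
  have hpx := primeX hd x y h
  have hyx := y_nmem hd x y h
  have hreg : IsSMulRegular K x := by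
    intro a b hab
    exact smul_right_injective K hx0 hab
  have : Module.FinitePresentation A K := Module.finitePresentation_of_finite A K
  rw [← Module.free_quotSMulTop_iff_free A K (x := x) (by rwa [jacobson_eq_maximalIdeal _ bot_ne_top]) hreg]
  have := nontQuot x y h
  have : IsLocalRing (A ⧸ Ideal.span {x}) := .of_surjective' _ Ideal.Quotient.mk_surjective
  have hmax := maxQuot x y h
  have : IsDomain (A ⧸ Ideal.span {x}) := (Ideal.Quotient.isDomain_iff_prime _).2 hpx
  have : IsPrincipalIdealRing (A ⧸ Ideal.span {x}) :=
    ((tfae_of_isNoetherianRing_of_isLocalRing_of_isDomain (A ⧸ Ideal.span {x})).out 0 4 rfl rfl).2 ⟨_, hmax⟩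
  have := Module.Finite.of_restrictScalars_finite A (A ⧸ Ideal.span {x}) (QuotSMulTop x K)
  have hyreg : IsSMulRegular (QuotSMulTop x K) y := by
    rw [isSMulRegular_iff_right_eq_zero_of_smul]
    intro q hq
    obtain ⟨k, rfl⟩ := Submodule.mkQ_surjective _ q
    rw [← map_smul, Submodule.mkQ_apply, Submodule.Quotient.mk_eq_zero, Submodule.mem_smul_pointwise_iff_exists] at hq
    obtain ⟨k', -, hk'⟩ := hq
    have hk2 : x • (k' : ι → A) = y • (k : ι → A) := congrArg Subtype.val hk'
    have hdiv : ∀ i, ∃ c, x * c = (k : ι → A) i := by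
      intro i
      have h1 := congrFun hk2 i
      simp only [Pi.smul_apply, smul_eq_mul] at h1
      have h2 : y * (k : ι → A) i ∈ Ideal.span {x} := by
        rw [← h1]; exact Ideal.mul_mem_right _ _ (Ideal.mem_span_singleton_self x)
      obtain ⟨c, hc⟩ := Ideal.mem_span_singleton'.1 ((hpx.mem_or_mem h2).resolve_left hyx)
      exact ⟨c, by rw [mul_comm, hc]⟩
    choose l hl using hdiv
    have hxl : x • l = k := funext hl
    have hyl : y • l = k' := by
      apply smul_right_injective (ι → A) hx0
      simp only
      rw [smul_comm, hxl, hk2]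
    have hlK := hK l (hxl ▸ k.2) (hyl ▸ k'.2)
    rw [Submodule.mkQ_apply, Submodule.Quotient.mk_eq_zero, Submodule.mem_smul_pointwise_iff_exists]
    exact ⟨⟨l, hlK⟩, trivial, Subtype.ext hxl⟩
  have : Module.IsTorsionFree (A ⧸ Ideal.span {x}) (QuotSMulTop x K) := by
    constructor
    intro r hr
    obtain ⟨n, u, hu, rfl⟩ := l1 _ hmax r hr.ne_zero
    have h1 : IsSMulRegular (QuotSMulTop x K) (Ideal.Quotient.mk (Ideal.span {x}) y) := by
      intro a b hab
      apply hyreg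
      simpa using hab
    exact (hu.isSMulRegular _).mul (h1.pow n)
  exact Module.free_of_finite_type_torsion_free'

theorem final {R : Type*} {G : Type*} [CommRing R] [IsLocalRing R] [IsNoetherianRing R]
    (hd : ringKrullDim R = 2) (x y : R) (h : maximalIdeal R = Ideal.span {x, y})
    [AddCommGroup G] [Module R G] [Module.Finite R G]
    (htors : Module.IsTorsion R G)
    (hpure : ∀ N : Submodule R G, IsFiniteLength R ↥N → N = ⊥) :
    ∃ (a : ℕ) (f : (Fin a → R) →ₗ[R] (Fin a → R)),
      Function.Injective f ∧
        Nonempty (((Fin a → R) ⧸ LinearMap.range f) ≃ₗ[R] G) := by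
  have := domR hd x y h
  have hsoc : ∀ g : G, x • g = 0 → y • g = 0 → g = 0 := by
    intro g hx hy
    by_contra hg
    have hle : maximalIdeal R ≤ LinearMap.ker (LinearMap.toSpanSingleton R G g) := by
      rw [h, Ideal.span_le]
      rintro z (rfl | rfl) <;> simpa
    have hker : maximalIdeal R = LinearMap.ker (LinearMap.toSpanSingleton R G g) := by
      apply (maximalIdeal.isMaximal R).eq_of_le _ hle
      intro ht
      apply hg
      have : (1 : R) ∈ LinearMap.ker (LinearMap.toSpanSingleton R G g) := by rw [ht]; trivial
      simpa using this
    have hs : IsSimpleModule R (LinearMap.range (LinearMap.toSpanSingleton R G g)) := by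
      rw [isSimpleModule_iff_quot_maximal]
      exact ⟨_, hker ▸ maximalIdeal.isMaximal R,
        ⟨(LinearMap.quotKerEquivRange _).symm⟩⟩
    have hb := hpure _ (isFiniteLength_iff_isNoetherian_isArtinian.2 ⟨inferInstance, inferInstance⟩ :
      IsFiniteLength R (LinearMap.range (LinearMap.toSpanSingleton R G g)))
    apply hg
    have : g ∈ LinearMap.range (LinearMap.toSpanSingleton R G g) := ⟨1, by simp⟩
    rw [hb] at this
    simpa using this
  obtain ⟨n, p, hp⟩ := Module.Finite.exists_fin' R G
  set K := LinearMap.ker p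
  have hfree : Module.Free R K := by
    apply freeK hd x y h
    intro l h1 h2
    apply hsoc
    · rw [← map_smul]; exact h1
    · rw [← map_smul]; exact h2
  let e := p.quotKerEquivOfSurjective hp
  have hrk : Module.finrank R K = n := by
    have h1 := Submodule.finrank_quotient_add_finrank K
    rw [e.finrank_eq, Module.finrank_eq_zero_iff_isTorsion.2 htors] at h1
    simpa using h1
  let b := (Module.finBasisOfFinrankEq R K hrk).equivFun.symm
  refine ⟨n, K.subtype ∘ₗ b.toLinearMap, ?_, ?_⟩
  · exact K.injective_subtype.comp b.injective
  · have : LinearMap.range (K.subtype ∘ₗ b.toLinearMap) = K := by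
      rw [LinearMap.range_comp, LinearEquiv.range, Submodule.map_top, Submodule.range_subtype]
    rw [this]
    exact ⟨e⟩

end
end SqFree

/-- **Square free resolution.**  Over a regular local ring `R` of Krull dimension `2`,
a nonzero finitely generated torsion `R`-module `G` with no nonzero finite-length submodule
admits a free resolution `0 → R^a → R^a → G → 0` by free modules of equal finite rank. -/
theorem square_free_resolution {R : Type u} {G : Type v} [CommRing R] [IsLocalRing R]
    (hreg : IsRegularLocalRingOfDimTwo R)
    [AddCommGroup G] [Module R G] [Module.Finite R G] [Nontrivial G]
    (htors : Module.IsTorsion R G)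
    (hpure : ∀ N : Submodule R G, IsFiniteLength R ↥N → N = ⊥) :
    ∃ (a : ℕ) (f : (Fin a → R) →ₗ[R] (Fin a → R)),
      Function.Injective f ∧
        Nonempty (((Fin a → R) ⧸ LinearMap.range f) ≃ₗ[R] G) := by
  obtain ⟨hN, hd, x, y, hxy⟩ := hreg
  exact SqFree.final hd x y hxy htors hpure
end

section
/- Let R be a regular local ring of Krull dimension 2, and let 0 → I → F → T → 0 be a short exact sequence of finitely generated R-modules in which I and F are torsion (i.e., killed after tensoring with Frac(R)) and have no nonzero submodule of finite length, and T has finite length. Then the long exact sequence obtained by applying Hom_R(−, R) induces a short exact sequence 0 → Ext^1_R(F, R) → Ext^1_R(I, R) → Ext^2_R(T, R) → 0. -/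
open CategoryTheory

namespace ThickAux
open IsLocalRing

lemma exists_generic {R : Type*} [CommRing R] [IsLocalRing R] (x y : R)
    (hm : maximalIdeal R = Ideal.span {x, y}) (Ps : Set (Ideal R)) (hfin : Ps.Finite)
    (hP : ∀ P ∈ Ps, P.IsPrime ∧ P ≠ maximalIdeal R) :
    ∃ z, maximalIdeal R = Ideal.span {z, y} ∧ ∀ P ∈ Ps, z ∉ P := by
  have hxm : x ∈ maximalIdeal R := hm ▸ Ideal.subset_span (by simp)
  have hym : y ∈ maximalIdeal R := hm ▸ Ideal.subset_span (by simp)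
  have key : ∃ n : ℕ, ∀ P ∈ Ps, x + y ^ (n + 1) ∉ P := by
    by_contra! hcon
    choose f hf hf' using hcon
    have : Finite Ps := hfin
    obtain ⟨a, b, hab, he⟩ := Finite.exists_ne_map_eq_of_infinite (fun n => (⟨f n, hf n⟩ : Ps))
    have he : f a = f b := congrArg Subtype.val he
    wlog hlt : a < b generalizing a b
    · exact this b a hab.symm (by simp [he]) he.symm (by omega)
    obtain ⟨c, rfl⟩ := Nat.exists_eq_add_of_lt hlt
    obtain ⟨hp, hne⟩ := hP _ (hf a)
    have h1 : y ^ (a + 1) * (1 - y ^ (c + 1)) ∈ f a := by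
      have := (f a).sub_mem (hf' a) (he ▸ hf' (a + c + 1))
      convert this using 1
      ring
    have hu : IsUnit (1 - y ^ (c + 1)) := by
      refine (IsLocalRing.isUnit_or_isUnit_one_sub_self (y ^ (c + 1))).resolve_left fun h => ?_
      exact (mem_maximalIdeal _).1 hym ((isUnit_pow_iff (by simp)).1 h)
    have h2 : y ^ (a + 1) ∈ f a := (hp.mem_or_mem h1).resolve_right fun h =>
      hp.ne_top (Ideal.eq_top_of_isUnit_mem _ h hu)
    have hy := hp.mem_of_pow_mem _ h2
    have hx : x ∈ f a := by
      have := (f a).sub_mem (hf' a) h2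
      simpa using this
    refine hne (le_antisymm (le_maximalIdeal hp.ne_top) ?_)
    rw [hm, Ideal.span_le]
    rintro t (rfl | rfl)
    · exact hx
    · exact hy
  obtain ⟨n, hn⟩ := key
  refine ⟨_, ?_, hn⟩
  rw [hm]
  have hy' : y ∈ Ideal.span {x + y ^ (n + 1), y} := Ideal.subset_span (by simp)
  have hy : y ∈ Ideal.span {x, y} := Ideal.subset_span (by simp)
  apply le_antisymm <;> rw [Ideal.span_le]
  · rintro t (rfl | rfl)
    · have h : t + y ^ (n + 1) ∈ Ideal.span {t + y ^ (n + 1), y} := Ideal.subset_span (by simp)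
      simpa using Ideal.sub_mem _ h (Ideal.pow_mem_of_mem _ hy' (n + 1) (by simp))
    · exact hy'
  · rintro t (rfl | rfl)
    · exact Ideal.add_mem _ (Ideal.subset_span (by simp))
        (Ideal.pow_mem_of_mem _ hy (n + 1) (by simp))
    · exact hy

lemma not_minimal {R : Type*} [CommRing R] [IsLocalRing R] [IsNoetherianRing R]
    (hd : ringKrullDim R = 2) (z : R) : maximalIdeal R ∉ (Ideal.span {z}).minimalPrimes := by
  intro h
  have h1 := Ideal.height_le_one_of_isPrincipal_of_mem_minimalPrimes (Ideal.span {z}) _ h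
  rw [← maximalIdeal_height_eq_ringKrullDim] at hd
  have h2 : (maximalIdeal R).height = 2 := by
    have h3 : (((maximalIdeal R).height : ℕ∞) : WithBot ℕ∞) = ((2 : ℕ∞) : WithBot ℕ∞) := hd
    exact WithBot.coe_injective h3
  rw [h2] at h1
  exact absurd h1 (by decide)

lemma span_prime {R : Type*} [CommRing R] [IsLocalRing R] [IsNoetherianRing R]
    (hd : ringKrullDim R = 2) (z w : R) (hm : maximalIdeal R = Ideal.span {z, w}) :
    (Ideal.span {z}).IsPrime ∧ w ∉ Ideal.span {z} := by
  have hzm : Ideal.span {z} ≤ maximalIdeal R := by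
    rw [hm]; exact Ideal.span_mono (by simp)
  have hwm : w ∈ maximalIdeal R := hm ▸ Ideal.subset_span (by simp)
  obtain ⟨P, hP, hPm⟩ := Ideal.exists_minimalPrimes_le hzm
  have hp : P.IsPrime := hP.1.1
  have hzP : Ideal.span {z} ≤ P := hP.1.2
  have hw : w ∉ P := by
    intro hw
    apply not_minimal hd z
    have : P = maximalIdeal R := le_antisymm hPm (by
      rw [hm, Ideal.span_le]
      rintro t (rfl | rfl)
      · exact hzP (Ideal.subset_span (by simp))
      · exact hw)
    exact this ▸ hP
  have : P = Ideal.span {z} := by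
    refine le_antisymm ?_ hzP
    refine Submodule.le_of_le_smul_of_le_jacobson_bot (I := maximalIdeal R)
      (IsNoetherian.noetherian P) (IsLocalRing.maximalIdeal_le_jacobson _) ?_
    intro a ha
    have ham := hPm ha
    rw [hm, Ideal.mem_span_pair] at ham
    obtain ⟨s, t, rfl⟩ := ham
    have hsz : s * z ∈ Ideal.span {z} := Ideal.mem_span_singleton'.2 ⟨s, rfl⟩
    have htw : t * w ∈ P := by simpa using P.sub_mem ha (hzP hsz)
    have ht : t ∈ P := (hp.mem_or_mem htw).resolve_right hw
    refine Submodule.add_mem_sup hsz ?_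
    rw [mul_comm]
    exact Submodule.smul_mem_smul hwm ht
  rw [← this]
  exact ⟨hp, hw⟩

lemma domain_of {R : Type*} [CommRing R] [IsLocalRing R] [IsNoetherianRing R]
    (z : R) (hz : (Ideal.span {z}).IsPrime) (hmin : ∀ P ∈ minimalPrimes R, z ∉ P) :
    IsDomain R := by
  obtain ⟨P, hP, hPz⟩ := Ideal.exists_minimalPrimes_le (bot_le : (⊥ : Ideal R) ≤ Ideal.span {z})
  have hp : P.IsPrime := hP.1.1
  have hzm : z ∈ maximalIdeal R :=
    le_maximalIdeal hz.ne_top (Ideal.subset_span (by simp))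
  have : P = ⊥ := by
    refine Submodule.eq_bot_of_le_smul_of_le_jacobson_bot (maximalIdeal R) P
      (IsNoetherian.noetherian P) ?_ (IsLocalRing.maximalIdeal_le_jacobson _)
    intro a ha
    obtain ⟨s, rfl⟩ := Ideal.mem_span_singleton'.1 (hPz ha)
    have hs : s ∈ P := (hp.mem_or_mem ha).resolve_right (hmin P hP)
    rw [mul_comm]
    exact Submodule.smul_mem_smul hzm hs
  subst this
  exact IsDomain.of_bot_isPrime R

lemma max_not_ass {R : Type*} [CommRing R] [IsLocalRing R] [IsNoetherianRing R]
    {M : Type*} [AddCommGroup M] [Module R M]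
    (hpure : ∀ N : Submodule R M, IsFiniteLength R ↥N → N = ⊥) :
    maximalIdeal R ∉ associatedPrimes R M := by
  intro h
  rw [AssociatedPrimes.mem_iff, isAssociatedPrime_iff] at h
  obtain ⟨hp, v, hv⟩ := h
  have hk : LinearMap.ker (LinearMap.toSpanSingleton R M v) = maximalIdeal R := by
    ext r
    rw [hv, Submodule.mem_colon_singleton]
    simp
  have hs : IsSimpleModule R (LinearMap.range (LinearMap.toSpanSingleton R M v)) :=
    isSimpleModule_iff_quot_maximal.2 ⟨_, hk ▸ maximalIdeal.isMaximal R,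
      ⟨(LinearMap.quotKerEquivRange _).symm⟩⟩
  have h0 := hpure (LinearMap.range (LinearMap.toSpanSingleton R M v)) (isFiniteLength_iff_isNoetherian_isArtinian.2 ⟨inferInstance, inferInstance⟩)
  rw [LinearMap.range_eq_bot] at h0
  rw [h0, LinearMap.ker_zero] at hk
  exact hp.ne_top hk.symm

lemma pow_kills {R : Type*} [CommRing R] [IsLocalRing R]
    {M : Type*} [AddCommGroup M] [Module R M] (h : IsFiniteLength R M)
    (r : R) (hr : r ∈ maximalIdeal R) : ∃ n : ℕ, ∀ t : M, r ^ n • t = 0 := by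
  obtain ⟨_, _⟩ := isFiniteLength_iff_isNoetherian_isArtinian.1 h
  obtain ⟨n, hn⟩ := IsArtinian.range_smul_pow_stabilizes M r
  have hb : (r ^ n • LinearMap.id : M →ₗ[R] M).range = ⊥ := by
    refine Submodule.eq_bot_of_le_smul_of_le_jacobson_bot (maximalIdeal R) _
      (IsNoetherian.noetherian _) ?_ (IsLocalRing.maximalIdeal_le_jacobson _)
    conv_lhs => rw [hn (n + 1) (by simp)]
    rintro _ ⟨t, rfl⟩
    have : (r ^ (n + 1) • LinearMap.id : M →ₗ[R] M) t =
      r • (r ^ n • LinearMap.id : M →ₗ[R] M) t := by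
      simp [pow_succ', mul_smul]
    rw [this]
    exact Submodule.smul_mem_smul hr ⟨t, rfl⟩
  refine ⟨n, fun t => ?_⟩
  have : (r ^ n • LinearMap.id : M →ₗ[R] M) t ∈ (⊥ : Submodule R M) := hb ▸ ⟨t, rfl⟩
  simpa using this

open Pointwise in
lemma ker_free {R : Type*} [CommRing R] [IsDomain R] [IsLocalRing R] [IsNoetherianRing R]
    (z w : R) (hm : maximalIdeal R = Ideal.span {z, w}) (hz : (Ideal.span {z}).IsPrime)
    (hz0 : z ≠ 0)
    {M : Type*} [AddCommGroup M] [Module R M] (hreg : IsSMulRegular M z) {n : ℕ}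
    (f : (Fin n → R) →ₗ[R] M) : Module.Free R (LinearMap.ker f) := by
  have hzm : z ∈ maximalIdeal R :=
    le_maximalIdeal hz.ne_top (Ideal.subset_span (by simp))
  have hK : IsSMulRegular (LinearMap.ker f) z := by
    intro a b hab
    ext i
    have := congrFun (congrArg Subtype.val hab) i
    simpa [hz0] using this
  have : Module.FinitePresentation R (LinearMap.ker f) :=
    Module.finitePresentation_of_finite _ _
  rw [← Module.free_quotSMulTop_iff_free R _ (x := z)
    (IsLocalRing.maximalIdeal_le_jacobson _ hzm) hK]
  have : IsDomain (R ⧸ Ideal.span {z}) := Ideal.Quotient.isDomain _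
  have : IsLocalRing (R ⧸ Ideal.span {z}) :=
    .of_surjective' (Ideal.Quotient.mk _) Ideal.Quotient.mk_surjective
  have hprin : (maximalIdeal (R ⧸ Ideal.span {z})).IsPrincipal := by
    refine ⟨Ideal.Quotient.mk _ w, ?_⟩
    apply le_antisymm
    · intro a ha
      obtain ⟨a, rfl⟩ := Ideal.Quotient.mk_surjective a
      have : a ∈ maximalIdeal R := by
        rw [mem_maximalIdeal] at ha ⊢
        exact fun h => ha (h.map _)
      rw [hm, Ideal.mem_span_pair] at this
      obtain ⟨s, t, rfl⟩ := this
      have h0 : Ideal.Quotient.mk (Ideal.span {z}) z = 0 :=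
        Ideal.Quotient.eq_zero_iff_mem.2 (Ideal.subset_span (by simp))
      simp only [map_add, map_mul, h0, mul_zero, zero_add]
      exact Ideal.mem_span_singleton'.2 ⟨_, rfl⟩
    · rw [Ideal.submodule_span_eq, Ideal.span_le]
      rintro _ rfl
      have hwm : w ∈ maximalIdeal R := hm ▸ Ideal.subset_span (by simp)
      rw [SetLike.mem_coe, mem_maximalIdeal]
      intro h
      have hl : IsLocalHom (Ideal.Quotient.mk (Ideal.span {z})) :=
        IsLocalHom.of_surjective _ Ideal.Quotient.mk_surjective
      exact hwm (hl.map_nonunit _ h)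
  have : IsPrincipalIdealRing (R ⧸ Ideal.span {z}) :=
    ((tfae_of_isNoetherianRing_of_isLocalRing_of_isDomain _).out 4 0).1 hprin
  have : Module.Finite (R ⧸ Ideal.span {z}) (QuotSMulTop z (LinearMap.ker f)) :=
    Module.Finite.of_restrictScalars_finite R _ _
  have : Module.IsTorsionFree (R ⧸ Ideal.span {z}) (QuotSMulTop z (LinearMap.ker f)) := by
    refine ⟨fun r hr => ?_⟩
    have hr0 : r ≠ 0 := hr.ne_zero
    rw [isSMulRegular_iff_right_eq_zero_of_smul]
    intro k hk
    obtain ⟨r, rfl⟩ := Ideal.Quotient.mk_surjective r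
    obtain ⟨k, rfl⟩ := Submodule.mkQ_surjective _ k
    have hrz : r ∉ Ideal.span {z} := fun h => hr0 (Ideal.Quotient.eq_zero_iff_mem.2 h)
    have hk' : (z • (⊤ : Submodule R (LinearMap.ker f))).mkQ (r • k) = 0 := hk
    rw [Submodule.mkQ_apply, Submodule.Quotient.mk_eq_zero,
      Submodule.mem_smul_pointwise_iff_exists] at hk'
    obtain ⟨k', -, hk'⟩ := hk'
    have hd : ∀ i, ∃ v, z * v = k.1 i := by
      intro i
      have h1 : z * k'.1 i = r * k.1 i := congrFun (congrArg Subtype.val hk') i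
      have h2 : r * k.1 i ∈ Ideal.span {z} := h1 ▸ Ideal.mem_span_singleton'.2 ⟨_, mul_comm _ _⟩
      obtain ⟨v, hv⟩ := Ideal.mem_span_singleton'.1 ((hz.mem_or_mem h2).resolve_left hrz)
      exact ⟨v, by rw [mul_comm, hv]⟩
    choose v hv using hd
    have hv' : z • v = k.1 := funext hv
    have hfv : f v = 0 := by
      apply (isSMulRegular_iff_right_eq_zero_of_smul.1 hreg)
      rw [← map_smul, hv']
      exact k.2
    rw [Submodule.mkQ_apply, Submodule.Quotient.mk_eq_zero,
      Submodule.mem_smul_pointwise_iff_exists]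
    exact ⟨⟨v, hfv⟩, trivial, Subtype.ext hv'⟩
  exact Module.free_of_finite_type_torsion_free'

universe w

lemma ext_two {R : Type u} [CommRing R] [IsDomain R] [IsLocalRing R] [IsNoetherianRing R]
    (z y : R) (hm : maximalIdeal R = Ideal.span {z, y}) (hz : (Ideal.span {z}).IsPrime)
    (hz0 : z ≠ 0) (M : ModuleCat.{u} R) [Module.Finite R M] (hreg : IsSMulRegular M z) :
    HasProjectiveDimensionLT M 2 := by
  obtain ⟨n, f, hf⟩ := Module.Finite.exists_fin' R M
  have hS := LinearMap.shortExact_shortComplexKer hf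
  have := ker_free z y hm hz hz0 hreg f
  have h1 : Projective f.shortComplexKer.X₁ :=
    (IsProjective.iff_projective (R := R) (LinearMap.ker f)).1 inferInstance
  have h2 : Projective f.shortComplexKer.X₂ :=
    (IsProjective.iff_projective (R := R) (Fin n → R)).1 inferInstance
  exact hS.hasProjectiveDimensionLT_X₃ 1 inferInstance inferInstance

open Pointwise in
lemma ext_one {R : Type u} [CommRing R] [IsDomain R] [IsLocalRing R] [IsNoetherianRing R]
    [HasExt.{w} (ModuleCat.{u} R)]
    (z y : R) (hm : maximalIdeal R = Ideal.span {z, y}) (hz : (Ideal.span {z}).IsPrime)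
    (hy : y ∉ Ideal.span {z})
    (hz0 : z ≠ 0) (T : ModuleCat.{u} R) (hT : IsFiniteLength R T)
    (e : Abelian.Ext T (ModuleCat.of R R) 1) : e = 0 := by
  have hreg : IsSMulRegular (ModuleCat.of R R) z := fun a b h => mul_left_cancel₀ hz0 h
  have hS := hreg.smulShortComplex_shortExact
  have hinj : ∀ e : Abelian.Ext T (ModuleCat.of R R) 1, z • e = 0 → e = 0 := by
    intro e he
    have hz1 : e.comp (Abelian.Ext.mk₀ (z • 𝟙 (ModuleCat.of R R))) (add_zero 1) = 0 := by
      rw [Abelian.Ext.mk₀_smul, Abelian.Ext.comp_smul, Abelian.Ext.comp_mk₀_id]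
      exact he
    obtain ⟨x, rfl⟩ := Abelian.Ext.covariant_sequence_exact₁ T hS e hz1 (zero_add 1)
    obtain ⟨g, rfl⟩ := Abelian.Ext.addEquiv₀.symm.surjective x
    have hg : g = 0 := by
      ext t
      obtain ⟨n, hn⟩ := pow_kills hT y (hm ▸ Ideal.subset_span (by simp))
      have h1 : y ^ n • g.hom t = 0 := by rw [← map_smul, hn, map_zero]
      change g.hom t = 0
      generalize g.hom t = q at h1
      obtain ⟨q, rfl⟩ := Submodule.mkQ_surjective (z • (⊤ : Submodule R R)) q
      have key : ∀ a : R, a ∈ z • (⊤ : Submodule R R) ↔ a ∈ Ideal.span {z} := by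
        intro a
        rw [Submodule.mem_smul_pointwise_iff_exists, Ideal.mem_span_singleton']
        simp [mul_comm]
      have h2 : (z • (⊤ : Submodule R R)).mkQ (y ^ n • q) = 0 := h1
      rw [Submodule.mkQ_apply, Submodule.Quotient.mk_eq_zero, key] at h2
      change (z • (⊤ : Submodule R R)).mkQ q = 0
      rw [Submodule.mkQ_apply, Submodule.Quotient.mk_eq_zero, key]
      exact (hz.mem_or_mem h2).resolve_left fun h => hy (hz.mem_of_pow_mem _ h)
    subst hg
    rw [map_zero]
    exact Abelian.Ext.zero_comp T 0 hS.extClass 1 (zero_add 1)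
  obtain ⟨n, hn⟩ := pow_kills hT z (hm ▸ Ideal.subset_span (by simp))
  have hk : z ^ n • e = 0 := by
    have h0 : z ^ n • 𝟙 T = 0 := by
      ext t
      exact hn t
    have : z ^ n • e = (Abelian.Ext.mk₀ (z ^ n • 𝟙 T)).comp e (zero_add 1) := by
      simp [Abelian.Ext.mk₀_smul]
    rw [this, h0]
    simp
  clear hn
  induction n with
  | zero => simpa using hk
  | succ n ih => exact ih (hinj _ (by rwa [smul_smul, ← pow_succ']))

end ThickAux

/-- Let `R` be a regular local ring of Krull dimension `2` and let
`0 → I → F → T → 0` be a short exact sequence of finitely generated `R`-modules where `I`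
and `F` are torsion with no nonzero finite-length submodule and `T` has finite length.
Then applying `Hom_R(−, R)` induces a short exact sequence
`0 → Ext¹(F, R) → Ext¹(I, R) → Ext²(T, R) → 0`, where the first map is composition with
(the degree-zero Ext class of) `I → F` and the second is composition with the extension
class of the sequence. -/
theorem ext_short_exact_of_thickening {R : Type u} [CommRing R] [IsLocalRing R]
    (hreg : IsRegularLocalRingOfDimTwo R)
    (S : ShortComplex (ModuleCat.{u} R)) (hS : S.ShortExact)
    (hIfg : Module.Finite R ↥S.X₁) (hFfg : Module.Finite R ↥S.X₂)
    (hTfg : Module.Finite R ↥S.X₃)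
    (hItors : Module.IsTorsion R ↥S.X₁) (hFtors : Module.IsTorsion R ↥S.X₂)
    (hIpure : ∀ N : Submodule R ↥S.X₁, IsFiniteLength R ↥N → N = ⊥)
    (hFpure : ∀ N : Submodule R ↥S.X₂, IsFiniteLength R ↥N → N = ⊥)
    (hTlen : IsFiniteLength R ↥S.X₃) :
    haveI : HasExt.{u + 1} (ModuleCat.{u} R) :=
      letI := HasDerivedCategory.standard (ModuleCat.{u} R)
      hasExt_of_hasDerivedCategory _
    Function.Injective (fun x : Abelian.Ext S.X₂ (ModuleCat.of R R) 1 =>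
        (Abelian.Ext.mk₀ S.f).comp x (zero_add 1)) ∧
      Function.Surjective (fun y : Abelian.Ext S.X₁ (ModuleCat.of R R) 1 =>
        hS.extClass.comp y rfl) ∧
      ∀ y : Abelian.Ext S.X₁ (ModuleCat.of R R) 1,
        hS.extClass.comp y rfl = 0 ↔
          ∃ x : Abelian.Ext S.X₂ (ModuleCat.of R R) 1,
            (Abelian.Ext.mk₀ S.f).comp x (zero_add 1) = y := by
  obtain ⟨_, hd, x, y, hm⟩ := hreg
  letI : HasExt.{u + 1} (ModuleCat.{u} R) :=
    letI := HasDerivedCategory.standard (ModuleCat.{u} R)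
    hasExt_of_hasDerivedCategory _
  obtain ⟨z, hzm, hz⟩ := ThickAux.exists_generic x y hm
    (minimalPrimes R ∪ associatedPrimes R S.X₂)
    ((minimalPrimes.finite_of_isNoetherianRing R).union (associatedPrimes.finite R S.X₂)) (by
      rintro P (hP | hP)
      · refine ⟨hP.1.1, ?_⟩
        rintro rfl
        apply ThickAux.not_minimal hd (0 : R)
        rw [Ideal.span_singleton_zero]
        exact hP
      · refine ⟨hP.isPrime, ?_⟩
        rintro rfl
        exact ThickAux.max_not_ass hFpure hP)
  obtain ⟨hzp, hyz⟩ := ThickAux.span_prime hd z y hzm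
  have : IsDomain R := ThickAux.domain_of z hzp fun P hP => hz P (Or.inl hP)
  have hz0 : z ≠ 0 := by
    rintro rfl
    obtain ⟨P, hP, -⟩ := Ideal.exists_minimalPrimes_le
      (bot_le : (⊥ : Ideal R) ≤ IsLocalRing.maximalIdeal R)
    exact hz P (Or.inl hP) P.zero_mem
  have hzF : IsSMulRegular S.X₂ z := by
    by_contra h
    have h' : z ∈ {r | IsSMulRegular S.X₂ r}ᶜ := h
    rw [← biUnion_associatedPrimes_eq_compl_regular] at h'
    simp only [Set.mem_iUnion] at h'
    obtain ⟨P, hP, hzP⟩ := h'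
    exact hz P (Or.inr hP) hzP
  have hpd := ThickAux.ext_two z y hzm hzp hz0 S.X₂ hzF
  refine ⟨?_, ?_, ?_⟩
  · intro a b hab
    have h0 : (Abelian.Ext.mk₀ S.f).comp (a - b) (zero_add 1) = 0 := by
      have h1 := map_sub ((Abelian.Ext.mk₀ S.f).precomp (ModuleCat.of R R) (zero_add 1)) a b
      exact h1.trans (sub_eq_zero.2 hab)
    obtain ⟨c, hc⟩ := Abelian.Ext.contravariant_sequence_exact₂ hS _ _ h0
    rw [ThickAux.ext_one z y hzm hzp hyz hz0 S.X₃ hTlen c, Abelian.Ext.comp_zero] at hc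
    exact sub_eq_zero.1 hc.symm
  · intro c
    exact Abelian.Ext.contravariant_sequence_exact₃ hS _ c
      (Abelian.Ext.eq_zero_of_hasProjectiveDimensionLT _ 2 le_rfl) rfl
  · intro b
    constructor
    · exact Abelian.Ext.contravariant_sequence_exact₁ hS _ b rfl
    · rintro ⟨a, rfl⟩
      simp
end

section
/- Let R be a regular local ring of Krull dimension 2, and let I be a finitely generated R-module that is torsion (i.e., I ⊗_R Frac(R) = 0) and has no nonzero submodule of finite length. Then Ext^1_R(I, R) is a finitely generated R-module that is again torsion and has no nonzero submodule of finite length. -/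
open CategoryTheory

-- abstract module lemma
theorem ext_aux_ker {R : Type*} [CommRing R] {P0 P1 P2 : Type*}
    [AddCommGroup P0] [Module R P0] [AddCommGroup P1] [Module R P1]
    [AddCommGroup P2] [Module R P2]
    (d2 : P2 →ₗ[R] P1) (d1 : P1 →ₗ[R] P0) (hex : Function.Exact d2 d1)
    (a : R) (ha : a ∈ nonZeroDivisors R) (h : P0 →ₗ[R] P1)
    (hh : ∀ p, d1 (h p) = a • p) (f : P1 →ₗ[R] R) (hf : f ∘ₗ d2 = 0) :
    (∀ q, f (h (d1 q)) = a * f q) ∧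
    ((Ideal.span {a}).mkQ ∘ₗ f ∘ₗ h = 0 → ∃ g : P0 →ₗ[R] R, g ∘ₗ d1 = f) := by
  have key : ∀ q, f (h (d1 q)) = a * f q := by
    intro q
    have : d1 (h (d1 q) - a • q) = 0 := by simp [hh]
    obtain ⟨r, hr⟩ := (hex _).1 this
    have h2 : f (d2 r) = 0 := LinearMap.congr_fun hf r
    rw [hr, map_sub, map_smul, sub_eq_zero] at h2
    simpa using h2
  refine ⟨key, fun h0 => ?_⟩
  have hdiv : ∀ p, ∃ c, f (h p) = a * c := by
    intro p
    have := LinearMap.congr_fun h0 p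
    simp only [LinearMap.comp_apply, Submodule.mkQ_apply, LinearMap.zero_apply,
      Submodule.Quotient.mk_eq_zero, Ideal.mem_span_singleton] at this
    exact this
  choose g hg using hdiv
  have canc : ∀ {s t : R}, a * s = a * t → s = t := fun {s t} e =>
    (mul_cancel_left_mem_nonZeroDivisors ha).1 e
  refine ⟨{ toFun := g, map_add' := ?_, map_smul' := ?_ }, ?_⟩
  · intro p q; apply canc; rw [mul_add, ← hg, ← hg, ← hg]; simp
  · intro r q; apply canc; simp only [RingHom.id_apply, smul_eq_mul]
    rw [mul_left_comm, ← hg, ← hg]; simp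
  · ext q; apply canc; change a * g (d1 q) = _; rw [← hg, key]

theorem homology_inj {R : Type u} [CommRing R] (S : ShortComplex (ModuleCat.{u} R))
    {T : Type*} [AddCommGroup T] [Module R T] (φ : S.X₂ →ₗ[R] T)
    (h1 : ∀ z, φ (S.f.hom z) = 0)
    (h2 : ∀ z, S.g.hom z = 0 → φ z = 0 → ∃ w, S.f.hom w = z) :
    ∃ ψ : S.homology →ₗ[R] T, Function.Injective ψ ∧
      ∀ e, ∃ z, S.g.hom z = 0 ∧ ψ e = φ z := by
  let e := S.moduleCatHomologyIso.toLinearEquiv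
  let ψ0 : S.moduleCatLeftHomologyData.H →ₗ[R] T :=
    Submodule.liftQ _ (φ ∘ₗ (LinearMap.ker S.g.hom).subtype) (by
      rintro _ ⟨w, rfl⟩
      exact h1 w)
  refine ⟨ψ0 ∘ₗ e.toLinearMap, ?_, ?_⟩
  · refine Function.Injective.comp (g := ψ0) ?_ e.injective
    rw [injective_iff_map_eq_zero]
    intro x hx
    obtain ⟨⟨z, hz⟩, rfl⟩ := Submodule.mkQ_surjective _ x
    obtain ⟨w, hw⟩ := h2 z hz hx
    refine (Submodule.Quotient.mk_eq_zero _).2 ⟨w, Subtype.ext hw⟩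
  · intro x
    obtain ⟨⟨z, hz⟩, hx⟩ := Submodule.mkQ_surjective _ (e x)
    refine ⟨z, hz, ?_⟩
    change ψ0 (e x) = _
    rw [← hx]
    rfl

theorem ext_inj {R : Type u} {I : Type u} [CommRing R] [AddCommGroup I] [Module R I]
    (a : R) (ha : a ∈ nonZeroDivisors R) (haI : ∀ i : I, a • i = 0) :
    ∃ ψ : ↥(((Ext R (ModuleCat.{u} R) 1).obj (Opposite.op (ModuleCat.of R I))).obj
          (ModuleCat.of R R)) →ₗ[R] (I →ₗ[R] R ⧸ Ideal.span {a}), Function.Injective ψ := by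
  obtain ⟨P⟩ := (inferInstance : HasProjectiveResolution (ModuleCat.of R I)).out
  let K := P.complex.linearYonedaObj R (ModuleCat.of R R)
  let S := K.sc' 0 1 2
  let e : ((((Ext R (ModuleCat.{u} R) 1).obj (Opposite.op (ModuleCat.of R I))).obj
          (ModuleCat.of R R))) ≅ S.homology := P.isoExt 1 _ ≪≫
    ShortComplex.homologyMapIso (K.isoSc' 0 1 2 (by simp) (by simp))
  let d2 := (P.complex.d 2 1).hom
  let d1 := (P.complex.d 1 0).hom
  let π : P.complex.X 0 →ₗ[R] I := (P.π.f 0).hom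
  have hπ : Function.Surjective π :=
    (ModuleCat.epi_iff_surjective (P.π.f 0)).1 inferInstance
  have hex1 : Function.Exact d2 d1 := by
    exact (ShortComplex.ShortExact.moduleCat_exact_iff_function_exact _).1 (P.exact_succ 0)
  have hex0 : Function.Exact d1 π := by
    exact (ShortComplex.ShortExact.moduleCat_exact_iff_function_exact _).1 P.exact₀
  have : Module.Projective R (P.complex.X 0) := by
    have := P.projective 0
    exact (IsProjective.iff_projective _).2 this
  obtain ⟨h, hh⟩ : ∃ h : P.complex.X 0 →ₗ[R] P.complex.X 1, ∀ p, d1 (h p) = a • p := by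
    let m : P.complex.X 0 →ₗ[R] LinearMap.range d1 :=
      (a • LinearMap.id).codRestrict _ (fun p => (hex0 _).1 (by simp [haI]))
    obtain ⟨h, hh⟩ := Module.projective_lifting_property d1.rangeRestrict m
      d1.surjective_rangeRestrict
    exact ⟨h, fun p => congrArg Subtype.val (LinearMap.congr_fun hh p)⟩
  let q := (Ideal.span {a}).mkQ
  let φ : S.X₂ →ₗ[R] (P.complex.X 0 →ₗ[R] R ⧸ Ideal.span {a}) :=
    { toFun := fun f => q ∘ₗ (ModuleCat.Hom.hom f : P.complex.X 1 →ₗ[R] R) ∘ₗ h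
      map_add' := fun f g => by
        ext p; rfl
      map_smul' := fun r g => by
        ext p; rfl }
  obtain ⟨ψ, hψ, hψ'⟩ := homology_inj S φ (by
    intro (z : P.complex.X 0 ⟶ ModuleCat.of R R)
    ext p
    change q (z.hom (d1 (h p))) = 0
    rw [hh, map_smul]
    exact (Submodule.Quotient.mk_eq_zero _).2 (Ideal.mem_span_singleton.2 ⟨_, rfl⟩)) (by
    intro (z : P.complex.X 1 ⟶ ModuleCat.of R R) hz hφ
    have hz' : z.hom ∘ₗ d2 = 0 := congrArg ModuleCat.Hom.hom hz
    obtain ⟨g, hg⟩ := (ext_aux_ker d2 d1 hex1 a ha h hh z.hom hz').2 hφ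
    exact ⟨ModuleCat.ofHom g, ModuleCat.hom_ext hg⟩)
  let L : (I →ₗ[R] R ⧸ Ideal.span {a}) →ₗ[R] (P.complex.X 0 →ₗ[R] R ⧸ Ideal.span {a}) :=
    LinearMap.lcomp R _ π
  have hL : Function.Injective L := LinearMap.lcomp_injective_of_surjective _ hπ
  have hrange : ∀ x, ψ x ∈ LinearMap.range L := by
    intro x
    obtain ⟨z, hz, hx⟩ := hψ' x
    have hz' : (ModuleCat.Hom.hom z : P.complex.X 1 →ₗ[R] R) ∘ₗ d2 = 0 :=
      congrArg ModuleCat.Hom.hom hz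
    rw [hx]
    have k := (ext_aux_ker d2 d1 hex1 a ha h hh _ hz').1
    refine ((LinearMap.exact_lcomp_of_exact_of_surjective _ hex0 hπ) _).1 ?_
    ext p
    change q _ = 0
    refine (Submodule.Quotient.mk_eq_zero _).2 (Ideal.mem_span_singleton.2 ⟨_, k p⟩)
  refine ⟨(LinearEquiv.ofInjective L hL).symm.toLinearMap ∘ₗ (ψ.codRestrict _ hrange) ∘ₗ
    e.toLinearEquiv.toLinearMap, ?_⟩
  intro x y hxy
  exact e.toLinearEquiv.injective (hψ (congrArg Subtype.val
    ((LinearEquiv.ofInjective L hL).symm.injective hxy)))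

section
open IsLocalRing

theorem chain_contra {R : Type*} [CommRing R] [IsLocalRing R] [IsNoetherianRing R]
    {x y : R} (hm : maximalIdeal R = Ideal.span {x, y}) (p p1 : Ideal R)
    [p.IsPrime] [p1.IsPrime] (h01 : p < p1) (h12 : p1 < maximalIdeal R)
    {n : ℕ} (hy : y ^ n ∈ p ⊔ Ideal.span {x}) : False := by
  have hxm : x ∈ maximalIdeal R := hm ▸ Ideal.subset_span (by simp)
  have hmin : maximalIdeal R ∈ (p ⊔ Ideal.span {x}).minimalPrimes := by
    refine ⟨⟨inferInstance, sup_le (le_maximalIdeal (Ideal.IsPrime.ne_top ‹_›)) ?_⟩, ?_⟩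
    · simpa [Ideal.span_le] using hxm
    · rintro q ⟨hq, hle⟩ -
      rw [hm, Ideal.span_le]
      rintro z (rfl | rfl)
      · exact hle (Ideal.mem_sup_right (Ideal.mem_span_singleton_self _))
      · exact hq.mem_of_pow_mem _ (hle hy)
  have hle := Ideal.map_height_le_one_of_mem_minimalPrimes hmin
  let f := Ideal.Quotient.mk p
  have hf : Function.Surjective f := Ideal.Quotient.mk_surjective
  have hc : ∀ J : Ideal R, p ≤ J → (J.map f).comap f = J := fun J hJ => by
    rw [Ideal.comap_map_of_surjective' f hf, Ideal.mk_ker, sup_eq_left.2 hJ]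
  have hpr : ∀ J : Ideal R, J.IsPrime → p ≤ J → (J.map f).IsPrime := fun J _ hJ =>
    Ideal.map_isPrime_of_surjective hf (by rwa [Ideal.mk_ker])
  have hlt : ∀ J J' : Ideal R, p ≤ J → J < J' → J.map f < J'.map f := fun J J' hJ hJ' => by
    refine lt_of_le_of_ne (Ideal.map_mono hJ'.le) fun h => hJ'.ne ?_
    rw [← hc J hJ, ← hc J' (hJ.trans hJ'.le), h]
  have i0 := hpr p inferInstance le_rfl
  have i1 := hpr p1 inferInstance h01.le
  have i2 := hpr (maximalIdeal R) inferInstance (h01.le.trans h12.le)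
  have l1 := Ideal.height_strict_mono_of_isPrime_of_isPrime (hlt _ _ le_rfl h01)
  have l2 := Ideal.height_strict_mono_of_isPrime_of_isPrime (hlt _ _ h01.le h12)
  have : (p1.map f).height < 1 := lt_of_lt_of_le l2 hle
  rw [Order.lt_one_iff] at this
  rw [this] at l1
  exact not_lt_bot l1

theorem unit_pow {R : Type*} [CommRing R] [IsLocalRing R] [IsNoetherianRing R]
    {x y : R} (hm : maximalIdeal R = Ideal.span {x, y}) {r : R} (hr : ¬ x ∣ r) :
    ∃ (n : ℕ) (w c : R), y ^ n = w * r + c * x := by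
  have hxm : x ∈ maximalIdeal R := hm ▸ Ideal.subset_span (by simp)
  have hym : y ∈ maximalIdeal R := hm ▸ Ideal.subset_span (by simp)
  have hxt : Ideal.span {x} ≠ ⊤ := by
    rw [Ne, Ideal.span_singleton_eq_top]; exact hxm
  have : Nontrivial (R ⧸ Ideal.span {x}) := Ideal.Quotient.nontrivial_iff.2 hxt
  have : IsLocalRing (R ⧸ Ideal.span {x}) := .of_surjective' _ Ideal.Quotient.mk_surjective
  let f := Ideal.Quotient.mk (Ideal.span {x})
  have hyt : Ideal.span {f y} ≠ ⊤ := by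
    rw [Ne, Ideal.span_singleton_eq_top]
    intro hu
    obtain ⟨z, hz⟩ := hu.exists_right_inv
    obtain ⟨z, rfl⟩ := Ideal.Quotient.mk_surjective z
    have h1 : f (y * z) = f 1 := by rw [map_mul, map_one]; exact hz
    rw [Ideal.Quotient.eq] at h1
    have h2 : y * z - 1 ∈ maximalIdeal R := le_maximalIdeal hxt h1
    have h3 : (1 : R) ∈ maximalIdeal R := by
      have := (maximalIdeal R).sub_mem ((maximalIdeal R).mul_mem_right z hym) h2
      rwa [sub_sub_cancel] at this
    exact (Ideal.ne_top_iff_one _).1 (maximalIdeal.isMaximal R).ne_top h3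
  have hinf := Ideal.iInf_pow_eq_bot_of_isLocalRing _ hyt
  have hex : ∃ n, ¬ (f y) ^ n ∣ f r := by
    by_contra! hcon
    have : f r ∈ ⨅ i, Ideal.span {f y} ^ i := by
      simp only [Submodule.mem_iInf, Ideal.span_singleton_pow, Ideal.mem_span_singleton]
      exact hcon
    rw [hinf, Ideal.mem_bot, Ideal.Quotient.eq_zero_iff_mem, Ideal.mem_span_singleton] at this
    exact hr this
  classical
  have hspec := Nat.find_spec hex
  obtain ⟨n, hn⟩ : ∃ n, Nat.find hex = n + 1 := by
    refine Nat.exists_eq_succ_of_ne_zero fun h0 => ?_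
    rw [h0] at hspec; simp at hspec
  have hd : f y ^ n ∣ f r := by
    by_contra hcon
    have := Nat.find_min' hex hcon
    omega
  rw [hn] at hspec
  obtain ⟨s, hs⟩ := hd
  obtain ⟨s, rfl⟩ := Ideal.Quotient.mk_surjective s
  have hsu : IsUnit s := by
    by_contra hsn
    have : s ∈ maximalIdeal R := hsn
    rw [hm, Ideal.mem_span_pair] at this
    obtain ⟨b, c, rfl⟩ := this
    apply hspec
    have hx0 : f x = 0 := Ideal.Quotient.eq_zero_iff_mem.2 (Ideal.mem_span_singleton_self x)
    refine ⟨f c, ?_⟩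
    rw [hs, map_add, map_mul, map_mul]
    change f y ^ n * (f b * f x + f c * f y) = _
    rw [hx0]; ring
  obtain ⟨s, rfl⟩ := hsu
  have h1 : f r = f (y ^ n * s) := by rw [hs, map_mul, map_pow]
  rw [Ideal.Quotient.eq, Ideal.mem_span_singleton] at h1
  obtain ⟨c, hc⟩ := h1
  refine ⟨n, (s⁻¹ : Rˣ), - (s⁻¹ : Rˣ) * c, ?_⟩
  have : r = y ^ n * s + x * c := by rw [← hc]; ring
  rw [this]
  have h2 : ((s⁻¹ : Rˣ) : R) * s = 1 := by simp
  linear_combination (- y ^ n) * h2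

theorem regular_pair {R : Type*} [CommRing R] [IsLocalRing R] [IsNoetherianRing R]
    (hdim : ringKrullDim R = 2)
    {x y : R} (hm : maximalIdeal R = Ideal.span {x, y}) :
    x ∈ nonZeroDivisors R ∧ ∀ u v, u * y = v * x → x ∣ u := by
  have hxm : x ∈ maximalIdeal R := hm ▸ Ideal.subset_span (by simp)
  obtain ⟨l, hl⟩ := (Order.le_krullDim_iff (n := 2) (α := PrimeSpectrum R)).1 (by
    exact hdim.ge)
  obtain ⟨p, p1, hp, hp1, h01, h12⟩ : ∃ p p1 : Ideal R, p.IsPrime ∧ p1.IsPrime ∧ p < p1 ∧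
      p1 < maximalIdeal R := by
    refine ⟨(l ⟨0, by omega⟩).asIdeal, (l ⟨1, by omega⟩).asIdeal, (l _).isPrime, (l _).isPrime,
      l.strictMono (by simp [Fin.lt_def]), lt_of_lt_of_le
        (b := (l ⟨2, by omega⟩).asIdeal) (l.strictMono (by simp)) 
        (le_maximalIdeal (l _).isPrime.ne_top)⟩
  have hpx : ∀ r ∈ p, x ∣ r := by
    intro r hr
    by_contra hn
    obtain ⟨n, w, c, h⟩ := unit_pow hm hn
    refine chain_contra hm p p1 h01 h12 (n := n) ?_
    rw [h]
    exact Submodule.add_mem_sup (p.mul_mem_left _ hr)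
      (Ideal.mul_mem_left _ _ (Ideal.mem_span_singleton_self x))
  have hxp : x ∉ p := by
    intro hx
    obtain ⟨r, hr1, hr0⟩ := SetLike.exists_of_lt h01
    have hn : ¬ x ∣ r := fun ⟨c, hc⟩ => hr0 (hc ▸ p.mul_mem_right _ hx)
    obtain ⟨n, w, c, h⟩ := unit_pow hm hn
    have hy : y ∈ p1 := hp1.mem_of_pow_mem n (by
      rw [h]; exact p1.add_mem (p1.mul_mem_left _ hr1) (p1.mul_mem_left _ (h01.le hx)))
    refine h12.not_ge ?_
    rw [hm, Ideal.span_le]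
    rintro z (rfl | rfl)
    · exact h01.le hx
    · exact hy
  have hbot : p = ⊥ := by
    refine Submodule.eq_bot_of_le_smul_of_le_jacobson_bot (maximalIdeal R) p
      (IsNoetherian.noetherian p) ?_ (maximalIdeal_le_jacobson _)
    intro r hr
    obtain ⟨c, rfl⟩ := hpx r hr
    exact Submodule.smul_mem_smul hxm ((hp.mem_or_mem hr).resolve_left hxp)
  subst hbot
  refine ⟨?_, ?_⟩
  · rw [mem_nonZeroDivisors_iff_right]
    intro z hz
    exact (hp.mem_or_mem (show z * x ∈ (⊥ : Ideal R) from hz)).resolve_right hxp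
  · intro u v huv
    by_contra hn
    obtain ⟨n, w, c, h⟩ := unit_pow hm hn
    refine chain_contra hm ⊥ p1 h01 h12 (n := n + 1) ?_
    refine Ideal.mem_sup_right (Ideal.mem_span_singleton.2 ⟨w * v + c * y, ?_⟩)
    rw [pow_succ, h]
    linear_combination w * huv

theorem socle_zero {R : Type*} [CommRing R] [IsLocalRing R] [IsNoetherianRing R]
    (hdim : ringKrullDim R = 2)
    {x y : R} (hm : maximalIdeal R = Ideal.span {x, y}) {a : R} (ha : a ∈ nonZeroDivisors R)
    (s : R ⧸ Ideal.span {a}) (hs : ∀ r ∈ maximalIdeal R, r • s = 0) : s = 0 := by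
  obtain ⟨hx, hxy⟩ := regular_pair hdim hm
  obtain ⟨z, rfl⟩ := Ideal.Quotient.mk_surjective s
  have key : ∀ r ∈ maximalIdeal R, ∃ u, r * z = a * u := by
    intro r hr
    have : Ideal.Quotient.mk (Ideal.span {a}) (r * z) = 0 := hs r hr
    rwa [Ideal.Quotient.eq_zero_iff_mem, Ideal.mem_span_singleton] at this
  obtain ⟨u, hu⟩ := key x (hm ▸ Ideal.subset_span (by simp))
  obtain ⟨v, hv⟩ := key y (hm ▸ Ideal.subset_span (by simp))
  obtain ⟨w, rfl⟩ := hxy u v ((mul_cancel_left_mem_nonZeroDivisors ha).1 (by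
    linear_combination x * hv - y * hu))
  rw [Ideal.Quotient.eq_zero_iff_mem, Ideal.mem_span_singleton]
  exact ⟨w, (mul_cancel_left_mem_nonZeroDivisors hx).1 (by linear_combination hu)⟩

theorem fin_len_bot {R E : Type*} [CommRing R] [IsLocalRing R] [AddCommGroup E] [Module R E]
    (h : ∀ e : E, (∀ r ∈ maximalIdeal R, r • e = 0) → e = 0)
    (N : Submodule R E) (hN : IsFiniteLength R N) : N = ⊥ := by
  obtain ⟨_, _⟩ := isFiniteLength_iff_isNoetherian_isArtinian.1 hN
  rcases eq_bot_or_exists_atom_le (⊤ : Submodule R N) with h0 | ⟨A, hA, -⟩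
  · rw [← Submodule.subsingleton_iff_eq_bot]
    exact (Submodule.subsingleton_iff R).1 (subsingleton_of_bot_eq_top h0.symm)
  · exfalso
    have := isSimpleModule_iff_isAtom.2 hA
    have hann : Module.annihilator R A = maximalIdeal R :=
      IsLocalRing.eq_maximalIdeal IsSimpleModule.annihilator_isMaximal
    apply hA.1
    rw [eq_bot_iff]
    intro z hz
    refine Subtype.ext (h z fun r hr => ?_)
    rw [← hann, Module.mem_annihilator] at hr
    exact congrArg (fun t : A => ((t : N) : E)) (hr ⟨z, hz⟩)

end

/-- Over a regular local ring `R` of Krull dimension `2`, if `I` is a finitely generated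
torsion `R`-module with no nonzero finite-length submodule, then `Ext¹_R(I, R)` is again a
finitely generated torsion `R`-module with no nonzero finite-length submodule. -/
theorem ext_one_dual_is_pure {R : Type u} {I : Type u}
    [CommRing R] [IsLocalRing R] (hreg : IsRegularLocalRingOfDimTwo R)
    [AddCommGroup I] [Module R I] [Module.Finite R I]
    (htors : Module.IsTorsion R I)
    (hpure : ∀ N : Submodule R I, IsFiniteLength R ↥N → N = ⊥) :
    Module.Finite R
        ↥(((Ext R (ModuleCat.{u} R) 1).obj (Opposite.op (ModuleCat.of R I))).obj
          (ModuleCat.of R R)) ∧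
      Module.IsTorsion R
        ↥(((Ext R (ModuleCat.{u} R) 1).obj (Opposite.op (ModuleCat.of R I))).obj
          (ModuleCat.of R R)) ∧
      ∀ N : Submodule R
          ↥(((Ext R (ModuleCat.{u} R) 1).obj (Opposite.op (ModuleCat.of R I))).obj
            (ModuleCat.of R R)),
        IsFiniteLength R ↥N → N = ⊥ := by
  obtain ⟨hN, hdim, x, y, hm⟩ := hreg
  obtain ⟨a, ha1, ha⟩ := Submodule.annihilator_top_inter_nonZeroDivisors htors
  have haI : ∀ i : I, a • i = 0 := fun i =>
    Submodule.mem_annihilator.1 ha1 i Submodule.mem_top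
  obtain ⟨ψ, hψ⟩ := ext_inj (I := I) a ha haI
  refine ⟨Module.Finite.of_injective ψ hψ, ?_, ?_⟩
  · intro e
    refine ⟨⟨a, ha⟩, hψ ?_⟩
    change ψ (a • e) = ψ 0
    rw [map_smul, map_zero]
    ext i
    rw [LinearMap.smul_apply, ← map_smul, haI, map_zero, LinearMap.zero_apply]
  · refine fin_len_bot fun e he => hψ ?_
    rw [map_zero]
    ext i
    refine socle_zero hdim hm ha _ fun r hr => ?_
    rw [← LinearMap.smul_apply, ← map_smul, he r hr, map_zero, LinearMap.zero_apply]
end
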